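/- Let Y_a, Y_{a+1}, …, Y_b (a < t* ≤ b) be jointly Gaussian random vectors with values in ℝ^d and mean zero, and let P be a d×d real matrix. Suppose: (a) Cov(Y_{t*}, Y_{t*−1}) = P·Cov(Y_{t*−1}, Y_{t*−1}) and Cov(Y_{t*−1}) is invertible; (b) for every s with a ≤ s ≤ t*−2, Y_{t*} is conditionally independent of Y_s given Y_{t*−1}; (c) for every j ≥ 1 with t*+j ≤ b and every s with a ≤ s ≤ t*−1, Cov(Y_{t*+j}, Y_s) = 0. Then for every j ≥ 0 with t*+j ≤ b and every s with a ≤ s ≤ t*−1: Cov(Y_{t*+j}, Y_s) = P·Cov(Y_{t*−1}, Y_s) if j = 0, and Cov(Y_{t*+j}, Y_s) = 0 if j ≥ 1. -/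

import Mathlib

open MeasureTheory ProbabilityTheory

/-- The cross-covariance matrix of two random vectors: entry `(i, j)` is
`E[Xᵢ Yⱼ] − E[Xᵢ] E[Yⱼ]`. -/
noncomputable def covM {Ω : Type*} [MeasurableSpace Ω] (μ : Measure Ω)
    {ι κ : Type*} (X : Ω → ι → ℝ) (Y : Ω → κ → ℝ) : Matrix ι κ ℝ :=
  Matrix.of fun i j =>
    (∫ ω, X ω i * Y ω j ∂μ) - (∫ ω, X ω i ∂μ) * (∫ ω, Y ω j ∂μ)

/-- A random vector (indexed by a finite type) is (jointly) Gaussian if every linear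
combination of its components has a Gaussian distribution on `ℝ`. -/
def IsGaussianVec {Ω : Type*} [MeasurableSpace Ω] (μ : Measure Ω)
    {ι : Type*} [Fintype ι] (X : Ω → ι → ℝ) : Prop :=
  ∀ u : ι → ℝ, ∃ (a : ℝ) (s : NNReal),
    Measure.map (fun ω => ∑ i, u i * X ω i) μ = gaussianReal a s

/-!
The Gaussian residual `Y_{t*} - P Y_{t*-1}` is uncorrelated with `Y_{t*-1}` by (a), hence
independent of it, so `E[Y_{t*} | Y_{t*-1}]` is `P Y_{t*-1}` plus a constant. Conditional
independence given `Y_{t*-1}` makes `Cov(Y_{t*}, Y_s)` equal to the covariance of this conditional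
mean with `Y_s`, that is, to `P Cov(Y_{t*-1}, Y_s)`.
-/

open scoped Matrix

section ConditionalExpectation

variable {Ω : Type*} {m mΩ : MeasurableSpace Ω} {μ : Measure Ω}

lemma condExp_ae_eq_add_integral_sub_of_indep [IsFiniteMeasure μ] {E : Type*}
    [NormedAddCommGroup E] [NormedSpace ℝ E] [CompleteSpace E] [SecondCountableTopology E]
    [MeasurableSpace E] [BorelSpace E] (hm : m ≤ mΩ) {X V : Ω → E} (hXm : Measurable X)
    (hVm : StronglyMeasurable[m] V) (hX : Integrable X μ) (hV : Integrable V μ)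
    (hindep : Indep (MeasurableSpace.comap (X - V) inferInstance) m μ) :
    μ[X | m] =ᵐ[μ] fun ω => V ω + μ[X - V] := by
  have hVm' : Measurable V := (hVm.mono hm).measurable
  have hres : μ[X - V | m] =ᵐ[μ] fun _ => μ[X - V] :=
    condExp_indep_eq (hXm.sub hVm').comap_le hm (comap_measurable (X - V)).stronglyMeasurable hindep
  filter_upwards [condExp_sub hX hV m, hres] with ω hsub hω
  rw [Pi.sub_apply, condExp_of_stronglyMeasurable hm hVm hV] at hsub
  rw [← hω, hsub, add_sub_cancel]

lemma covariance_congr_left {X X' W : Ω → ℝ} (h : X =ᵐ[μ] X') :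
    cov[X, W; μ] = cov[X', W; μ] := by
  rw [covariance, covariance, integral_congr_ae h]
  exact integral_congr_ae (by filter_upwards [h] with ω hω; rw [hω])

variable [StandardBorelSpace Ω] {hm : m ≤ mΩ} {X W : Ω → ℝ}

lemma condExp_mul_ae_eq_of_condIndepFun [IsFiniteMeasure μ] (h : CondIndepFun m hm X W μ)
    (hXm : Measurable X) (hWm : Measurable W) (hX : Integrable X μ) (hW : Integrable W μ)
    (hXW : Integrable (X * W) μ) :
    μ[X * W | m] =ᵐ[μ] μ[X | m] * μ[W | m] := by
  have hker := ae_of_ae_trim hm ((condIndepFun_iff_map_prod_eq_prod_map_map hXm hWm).1 h)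
  filter_upwards [hker, condExp_ae_eq_integral_condExpKernel hm hXW,
    condExp_ae_eq_integral_condExpKernel hm hX, condExp_ae_eq_integral_condExpKernel hm hW]
    with ω hω hωXW hωX hωW
  have hindep : IndepFun X W (condExpKernel μ m ω) := by
    rw [indepFun_iff_map_prod_eq_prod_map_map hXm.aemeasurable hWm.aemeasurable]
    rwa [Kernel.prod_apply, Kernel.map_apply _ (by fun_prop), Kernel.map_apply _ hXm,
      Kernel.map_apply _ hWm] at hω
  rw [Pi.mul_apply, hωXW, hωX, hωW]
  exact hindep.integral_mul_eq_mul_integral hXm.aestronglyMeasurable hWm.aestronglyMeasurable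

lemma covariance_condExp_left_of_condIndepFun [IsProbabilityMeasure μ]
    (h : CondIndepFun m hm X W μ) (hXm : Measurable X) (hWm : Measurable W)
    (hX : MemLp X 2 μ) (hW : MemLp W 2 μ) :
    cov[μ[X | m], W; μ] = cov[X, W; μ] := by
  have hcX : MemLp (μ[X | m]) 2 μ := hX.condExp one_le_two
  have hWi : Integrable W μ := hW.integrable one_le_two
  have hprod : μ[μ[X | m] * W | m] =ᵐ[μ] μ[X * W | m] :=
    (condExp_mul_of_stronglyMeasurable_left stronglyMeasurable_condExp
      (hcX.integrable_mul hW) hWi).trans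
      (condExp_mul_ae_eq_of_condIndepFun h hXm hWm (hX.integrable one_le_two) hWi
        (hX.integrable_mul hW)).symm
  have hint : μ[μ[X | m] * W] = μ[X * W] := by
    rw [← integral_condExp hm, integral_congr_ae hprod, integral_condExp hm]
  rw [covariance_eq_sub hcX hW, covariance_eq_sub hX hW, hint, integral_condExp hm]

end ConditionalExpectation

section CrossCovariance

variable {Ω : Type*} {mΩ : MeasurableSpace Ω} {μ : Measure Ω} {ι κ ρ : Type*}
  {X X' : Ω → ι → ℝ} {Z : Ω → κ → ℝ} {W : Ω → ρ → ℝ}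

lemma covM_apply [IsProbabilityMeasure μ] (hX : ∀ i, MemLp (fun ω => X ω i) 2 μ)
    (hW : ∀ j, MemLp (fun ω => W ω j) 2 μ) (i : ι) (j : ρ) :
    covM μ X W i j = cov[fun ω => X ω i, fun ω => W ω j; μ] :=
  (covariance_eq_sub (hX i) (hW j)).symm

lemma covM_sub_left [IsProbabilityMeasure μ] (hX : ∀ i, MemLp (fun ω => X ω i) 2 μ)
    (hX' : ∀ i, MemLp (fun ω => X' ω i) 2 μ) (hW : ∀ j, MemLp (fun ω => W ω j) 2 μ) :
    covM μ (fun ω => X ω - X' ω) W = covM μ X W - covM μ X' W := by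
  ext i j
  have hXX' (i : ι) : MemLp (fun ω => (X ω - X' ω) i) 2 μ := (hX i).sub (hX' i)
  rw [Matrix.sub_apply, covM_apply hXX' hW, covM_apply hX hW, covM_apply hX' hW]
  exact covariance_fun_sub_left (hX i) (hX' i) (hW j)

lemma memLp_mulVec_apply [Fintype κ] (P : Matrix ι κ ℝ) {p : ENNReal}
    (hZ : ∀ k, MemLp (fun ω => Z ω k) p μ) (i : ι) :
    MemLp (fun ω => (P *ᵥ Z ω) i) p μ :=
  memLp_finsetSum _ fun k _ => (hZ k).const_mul (P i k)

lemma covM_mulVec_left [IsProbabilityMeasure μ] [Fintype κ] (P : Matrix ι κ ℝ)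
    (hZ : ∀ k, MemLp (fun ω => Z ω k) 2 μ) (hW : ∀ j, MemLp (fun ω => W ω j) 2 μ) :
    covM μ (fun ω => P *ᵥ Z ω) W = P * covM μ Z W := by
  ext i j
  rw [covM_apply (memLp_mulVec_apply P hZ) hW, Matrix.mul_apply]
  simp_rw [covM_apply hZ hW, ← covariance_const_mul_left]
  exact covariance_fun_sum_left (fun k => (hZ k).const_mul (P i k)) (hW j)

end CrossCovariance

section GaussianRegression

variable {Ω : Type*} {mΩ : MeasurableSpace Ω} {μ : Measure Ω} [IsProbabilityMeasure μ]
  {ι κ ρ : Type*} [Finite ι] [Fintype κ]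
  {X : Ω → ι → ℝ} {Z : Ω → κ → ℝ} {W : Ω → ρ → ℝ} {P : Matrix ι κ ℝ}

lemma indepFun_sub_mulVec_of_covM_eq_mul (hXZ : HasGaussianLaw (fun ω => (X ω, Z ω)) μ)
    (hP : covM μ X Z = P * covM μ Z Z) :
    IndepFun (fun ω => X ω - P *ᵥ Z ω) Z μ := by
  cases nonempty_fintype ι
  have hX (i : ι) : MemLp (fun ω => X ω i) 2 μ := (hXZ.fst.eval i).memLp_two
  have hZ (k : κ) : MemLp (fun ω => Z ω k) 2 μ := (hXZ.snd.eval k).memLp_two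
  have hPZ := memLp_mulVec_apply P hZ
  have hres (i : ι) : MemLp (fun ω => (X ω - P *ᵥ Z ω) i) 2 μ := (hX i).sub (hPZ i)
  have hcov : covM μ (fun ω => X ω - P *ᵥ Z ω) Z = 0 := by
    rw [covM_sub_left hX hPZ hZ, covM_mulVec_left P hZ hZ, hP, sub_self]
  have hgauss : HasGaussianLaw (fun ω => (X ω - P *ᵥ Z ω, Z ω)) μ :=
    hXZ.map ((ContinuousLinearMap.fst ℝ (ι → ℝ) (κ → ℝ) -
      P.mulVecLin.toContinuousLinearMap ∘L ContinuousLinearMap.snd ℝ (ι → ℝ) (κ → ℝ)).prod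
      (ContinuousLinearMap.snd ℝ (ι → ℝ) (κ → ℝ)))
  refine HasGaussianLaw.indepFun_of_covariance_eval
    (X := fun i ω => (X ω - P *ᵥ Z ω) i) (Y := fun k ω => Z ω k) hgauss fun i k => ?_
  rw [← covM_apply hres hZ, hcov, Matrix.zero_apply]

lemma condExp_comap_ae_eq_mulVec_add_const (hXZ : HasGaussianLaw (fun ω => (X ω, Z ω)) μ)
    (hXm : Measurable X) (hZm : Measurable Z) (hP : covM μ X Z = P * covM μ Z Z) (i : ι) :
    ∃ c : ℝ, μ[fun ω => X ω i | MeasurableSpace.comap Z inferInstance]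
      =ᵐ[μ] fun ω => (P *ᵥ Z ω) i + c := by
  cases nonempty_fintype ι
  have hX : MemLp (fun ω => X ω i) 2 μ := (hXZ.fst.eval i).memLp_two
  have hPZ : MemLp (fun ω => (P *ᵥ Z ω) i) 2 μ :=
    memLp_mulVec_apply P (fun k => (hXZ.snd.eval k).memLp_two) i
  have hPm : Measurable fun z : κ → ℝ => (P *ᵥ z) i := by
    unfold Matrix.mulVec dotProduct
    fun_prop
  have hindep : IndepFun ((fun ω => X ω i) - fun ω => (P *ᵥ Z ω) i) Z μ :=
    (indepFun_sub_mulVec_of_covM_eq_mul hXZ hP).comp (measurable_pi_apply i) measurable_id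
  exact ⟨_, condExp_ae_eq_add_integral_sub_of_indep hZm.comap_le (by fun_prop)
    (hPm.comp (comap_measurable Z)).stronglyMeasurable
    (hX.integrable one_le_two) (hPZ.integrable one_le_two) hindep⟩

lemma covM_eq_mul_of_condIndepFun [StandardBorelSpace Ω]
    (hXZ : HasGaussianLaw (fun ω => (X ω, Z ω)) μ)
    (hXm : Measurable X) (hZm : Measurable Z) (hWm : Measurable W)
    (hW : ∀ j, MemLp (fun ω => W ω j) 2 μ) (hP : covM μ X Z = P * covM μ Z Z)
    (h : CondIndepFun (MeasurableSpace.comap Z inferInstance) hZm.comap_le X W μ) :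
    covM μ X W = P * covM μ Z W := by
  cases nonempty_fintype ι
  have hX (i : ι) : MemLp (fun ω => X ω i) 2 μ := (hXZ.fst.eval i).memLp_two
  have hZ (k : κ) : MemLp (fun ω => Z ω k) 2 μ := (hXZ.snd.eval k).memLp_two
  have hPZ := memLp_mulVec_apply P hZ
  ext i j
  obtain ⟨c, hc⟩ := condExp_comap_ae_eq_mulVec_add_const hXZ hXm hZm hP i
  have hij := h.comp (measurable_pi_apply i) (measurable_pi_apply j)
  calc covM μ X W i j
      = cov[fun ω => X ω i, fun ω => W ω j; μ] := covM_apply hX hW i j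
    _ = cov[μ[fun ω => X ω i | MeasurableSpace.comap Z inferInstance], fun ω => W ω j; μ] :=
        (covariance_condExp_left_of_condIndepFun hij (by fun_prop) (by fun_prop)
          (hX i) (hW j)).symm
    _ = cov[fun ω => (P *ᵥ Z ω) i + c, fun ω => W ω j; μ] := covariance_congr_left hc
    _ = cov[fun ω => (P *ᵥ Z ω) i, fun ω => W ω j; μ] :=
        covariance_add_const_left ((hPZ i).integrable one_le_two) c
    _ = (P * covM μ Z W) i j := by rw [← covM_mulVec_left P hZ hW, covM_apply hPZ hW]

end GaussianRegression

section GaussianFamily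

variable {Ω : Type*} {mΩ : MeasurableSpace Ω} {μ : Measure Ω} {ι : Type*} [Fintype ι]

lemma IsGaussianVec.hasGaussianLaw {X : Ω → ι → ℝ} (h : IsGaussianVec μ X) (hX : Measurable X) :
    HasGaussianLaw X μ where
  isGaussian_map := by
    classical
    refine isGaussian_of_map_eq_gaussianReal fun L => ?_
    obtain ⟨c, v, hv⟩ := h fun i => L fun j => if i = j then 1 else 0
    have hL : L ∘ X = fun ω => ∑ i, L (fun j => if i = j then 1 else 0) * X ω i := by
      ext ω
      simpa [mul_comm] using L.toLinearMap.pi_apply_eq_sum_univ (X ω)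
    refine ⟨c, v, ?_⟩
    rw [Measure.map_map (by fun_prop) hX, hL, hv]

lemma IsGaussianVec.hasGaussianLaw_prodMk {a b : ℕ} {Y : ℕ → Ω → ι → ℝ}
    (h : IsGaussianVec μ (fun ω (q : Fin (b - a + 1) × ι) => Y (a + (q.1 : ℕ)) ω q.2))
    (hYm : ∀ t, Measurable (Y t)) {s t : ℕ} (hs : s ∈ Set.Icc a b) (ht : t ∈ Set.Icc a b) :
    HasGaussianLaw (fun ω => (Y s ω, Y t ω)) μ := by
  have hindex {r : ℕ} (hr : r ∈ Set.Icc a b) : ∃ q : Fin (b - a + 1), a + (q : ℕ) = r :=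
    ⟨⟨r - a, by grind⟩, by grind⟩
  obtain ⟨q, rfl⟩ := hindex hs
  obtain ⟨r, rfl⟩ := hindex ht
  exact (h.hasGaussianLaw (by fun_prop)).map
    ((ContinuousLinearMap.pi fun i => ContinuousLinearMap.proj (q, i)).prod
      (ContinuousLinearMap.pi fun i => ContinuousLinearMap.proj (r, i)))

end GaussianFamily

theorem regime_switch_cross_cov_blocks_general
    {Ω : Type*} [MeasurableSpace Ω] [StandardBorelSpace Ω] {μ : Measure Ω} [IsProbabilityMeasure μ]
    {ι : Type*} [Fintype ι] {a b tstar : ℕ} {Y : ℕ → Ω → ι → ℝ} (hYm : ∀ t, Measurable (Y t))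
    (hGauss : HasGaussianLaw (fun ω => (Y tstar ω, Y (tstar - 1) ω)) μ)
    (hL2 : ∀ s, a ≤ s → s + 2 ≤ tstar → ∀ i, MemLp (fun ω => Y s ω i) 2 μ)
    {P : Matrix ι ι ℝ}
    (ha : covM μ (Y tstar) (Y (tstar - 1)) = P * covM μ (Y (tstar - 1)) (Y (tstar - 1)))
    (hb : ∀ s, a ≤ s → s + 2 ≤ tstar →
      CondIndepFun (MeasurableSpace.comap (Y (tstar - 1)) inferInstance)
        (hYm _).comap_le (Y tstar) (Y s) μ)
    (hc : ∀ j, 1 ≤ j → tstar + j ≤ b → ∀ s, a ≤ s → s + 1 ≤ tstar →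
      covM μ (Y (tstar + j)) (Y s) = 0) :
    ∀ j, tstar + j ≤ b → ∀ s, a ≤ s → s + 1 ≤ tstar →
      (j = 0 → covM μ (Y tstar) (Y s) = P * covM μ (Y (tstar - 1)) (Y s)) ∧
      (1 ≤ j → covM μ (Y (tstar + j)) (Y s) = 0) := by
  refine fun j hj s has hs => ⟨fun _ => ?_, fun hj1 => hc j hj1 hj s has hs⟩
  obtain rfl | hle : s = tstar - 1 ∨ s + 2 ≤ tstar := by lia
  · exact ha
  · exact covM_eq_mul_of_condIndepFun hGauss (hYm _) (hYm _) (hYm _) (hL2 s has hle) ha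
      (hb s has hle)

/-- Around a regime switch at time `t*`, Conditions 3(a)–(c) imply that the
cross-covariances between post-switch and pre-switch observations are `P` times the lagged
covariances of the last pre-switch observation for the first post-switch observation, and
zero for all later ones. -/
theorem regime_switch_cross_cov_blocks
    {Ω : Type*} [MeasurableSpace Ω] [StandardBorelSpace Ω]
    (Pr : Measure Ω) [IsProbabilityMeasure Pr]
    {d : ℕ} (a b tstar : ℕ) (hab : a < tstar) (htb : tstar ≤ b)
    (Y : ℕ → Ω → Fin d → ℝ) (hYm : ∀ t, Measurable (Y t))
    (hGauss : IsGaussianVec Pr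
      (fun ω (q : Fin (b - a + 1) × Fin d) => Y (a + (q.1 : ℕ)) ω q.2))
    (hmean : ∀ t, a ≤ t → t ≤ b → ∀ i, ∫ ω, Y t ω i ∂Pr = 0)
    (P : Matrix (Fin d) (Fin d) ℝ)
    (ha : covM Pr (Y tstar) (Y (tstar - 1))
        = P * covM Pr (Y (tstar - 1)) (Y (tstar - 1)))
    (hainv : IsUnit (covM Pr (Y (tstar - 1)) (Y (tstar - 1))))
    (hb : ∀ s, a ≤ s → s + 2 ≤ tstar →
      CondIndepFun (MeasurableSpace.comap (Y (tstar - 1)) inferInstance)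
        ((hYm _).comap_le) (Y tstar) (Y s) Pr)
    (hc : ∀ j, 1 ≤ j → tstar + j ≤ b → ∀ s, a ≤ s → s + 1 ≤ tstar →
      covM Pr (Y (tstar + j)) (Y s) = 0) :
    ∀ j, tstar + j ≤ b → ∀ s, a ≤ s → s + 1 ≤ tstar →
      (j = 0 → covM Pr (Y tstar) (Y s) = P * covM Pr (Y (tstar - 1)) (Y s)) ∧
      (1 ≤ j → covM Pr (Y (tstar + j)) (Y s) = 0) := by
  have hpair {s t : ℕ} (hs : s ∈ Set.Icc a b) (ht : t ∈ Set.Icc a b) :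
      HasGaussianLaw (fun ω => (Y s ω, Y t ω)) Pr := hGauss.hasGaussianLaw_prodMk hYm hs ht
  exact regime_switch_cross_cov_blocks_general hYm (hpair (by grind) (by grind))
    (fun s _ _ i => ((hpair (s := s) (t := s) (by grind) (by grind)).fst.eval i).memLp_two) ha hb hc
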